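/- Let ρ ∈ C_c^∞(ℝ³;ℝ) be nonnegative with ∫ρ = 1, and set ρ_η(y) := η^{-3} ρ(y/η) for η > 0. Let Ω ⊂ ℝ³ be bounded and measurable, let (z_k) be a sequence in L^∞(ℝ³;ℝ^d), uniformly bounded in L^∞ and with each z_k vanishing a.e. outside Ω, and let z ∈ L^∞(ℝ³;ℝ^d) be such that z_k ⇀* z in L^∞ (i.e., ∫ z_k·g → ∫ z·g for every g ∈ L¹(ℝ³;ℝ^d)). Suppose there are numbers η_k with 0 < η_k < 2^{-k} such that ‖z_k − z_k ∗ ρ_{η_k}‖_{L²} < 2^{-k} for all k, and ‖(z_{k+1} − z_k) ∗ ρ_{η_j}‖_{L²} < 2^{-k} for all k and all j ≤ k. Then z_k → z strongly in L²(ℝ³;ℝ^d). -/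

import Mathlib

/-!
At the fixed scale `η k`, weak-* convergence gives pointwise convergence of `z_m ∗ ρ_{η k}` to
`z ∗ ρ_{η k}` (`mollify_tendsto_of_weak`), so Fatou's lemma and the telescoping hypothesis bound
`‖z_k ∗ ρ_{η k} - z ∗ ρ_{η k}‖` by `∑_{m ≥ k} 2⁻ᵐ = 2 · 2⁻ᵏ`. In

  `z_k - z = (z_k - z_k ∗ ρ_{η k}) + (z_k ∗ ρ_{η k} - z ∗ ρ_{η k}) + (z ∗ ρ_{η k} - z)`

the first two terms are therefore of size `2⁻ᵏ` in `L²`. The last one tends to zero because `z` is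
bounded and vanishes a.e. outside the bounded set `Ω` (`weak_limit_support`), so that Lebesgue
differentiation and dominated convergence apply (`mollify_tendsto_L2`).
-/

open MeasureTheory Filter Topology

noncomputable section

/-- Mollification of a vector-valued function `f` by the rescaled kernel
`ρ_η(y) = η⁻³ ρ(y/η)`: `(f ∗ ρ_η)(y) = ∫ ρ_η(y − x) f(x) dx`. -/
noncomputable def mollify (ρ : (Fin 3 → ℝ) → ℝ) (η : ℝ) {d : ℕ}
    (f : (Fin 3 → ℝ) → Fin d → ℝ) : (Fin 3 → ℝ) → Fin d → ℝ :=
  fun y => ∫ x, ((η ^ 3)⁻¹ * ρ (η⁻¹ • (y - x))) • f x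

lemma kernel_integrable {ρ : (Fin 3 → ℝ) → ℝ} (hρ : Integrable ρ) {η : ℝ} (hη : 0 < η)
    (y : Fin 3 → ℝ) :
    Integrable fun x => (η ^ 3)⁻¹ * ρ (η⁻¹ • (y - x)) :=
  ((hρ.comp_smul (inv_ne_zero hη.ne')).comp_sub_left y).const_mul _

lemma kernel_integral {ρ : (Fin 3 → ℝ) → ℝ} (hρint : ∫ x, ρ x = 1) {η : ℝ} (hη : 0 < η)
    (y : Fin 3 → ℝ) :
    ∫ x, (η ^ 3)⁻¹ * ρ (η⁻¹ • (y - x)) = 1 := by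
  rw [integral_const_mul, integral_sub_left_eq_self (fun x => ρ (η⁻¹ • x)) volume y,
    Measure.integral_comp_inv_smul_of_nonneg volume ρ hη.le, hρint]
  have : η ^ 3 ≠ 0 := by positivity
  simp [this]

lemma mollify_integrand_integrable {ρ : (Fin 3 → ℝ) → ℝ} (hρ : Integrable ρ) {η : ℝ} (hη : 0 < η)
    {d : ℕ} {f : (Fin 3 → ℝ) → Fin d → ℝ} (hf : Measurable f) {C : ℝ} (hC : ∀ y, ‖f y‖ ≤ C)
    (y : Fin 3 → ℝ) :
    Integrable fun x => ((η ^ 3)⁻¹ * ρ (η⁻¹ • (y - x))) • f x :=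
  (kernel_integrable hρ hη y).smul_bdd C hf.aestronglyMeasurable (ae_of_all _ hC)

lemma mollify_measurable {ρ : (Fin 3 → ℝ) → ℝ} (hρ : Continuous ρ) (η : ℝ)
    {d : ℕ} {f : (Fin 3 → ℝ) → Fin d → ℝ} (hf : Measurable f) :
    StronglyMeasurable (mollify ρ η f) := by
  unfold mollify
  apply StronglyMeasurable.integral_prod_right
    (f := fun y x => ((η ^ 3)⁻¹ * ρ (η⁻¹ • (y - x))) • f x)
  apply Measurable.stronglyMeasurable
  have : Measurable fun p : (Fin 3 → ℝ) × (Fin 3 → ℝ) => (η ^ 3)⁻¹ * ρ (η⁻¹ • (p.1 - p.2)) := by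
    apply Continuous.measurable
    fun_prop
  exact this.smul (hf.comp measurable_snd)

lemma mollify_sub {ρ : (Fin 3 → ℝ) → ℝ} (hρ : Integrable ρ) {η : ℝ} (hη : 0 < η)
    {d : ℕ} {f g : (Fin 3 → ℝ) → Fin d → ℝ} (hf : Measurable f) (hg : Measurable g) {C : ℝ}
    (hfC : ∀ y, ‖f y‖ ≤ C) (hgC : ∀ y, ‖g y‖ ≤ C) :
    mollify ρ η (f - g) = mollify ρ η f - mollify ρ η g := by
  funext y
  simp only [mollify, Pi.sub_apply, smul_sub (_ * _)]
  exact integral_sub (mollify_integrand_integrable hρ hη hf hfC y)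
    (mollify_integrand_integrable hρ hη hg hgC y)

lemma norm_mollify_le {ρ : (Fin 3 → ℝ) → ℝ} (hρ : Integrable ρ) (hρpos : ∀ x, 0 ≤ ρ x)
    (hρint : ∫ x, ρ x = 1) {η : ℝ} (hη : 0 < η)
    {d : ℕ} {f : (Fin 3 → ℝ) → Fin d → ℝ} {C : ℝ} (hC : ∀ y, ‖f y‖ ≤ C) (y : Fin 3 → ℝ) :
    ‖mollify ρ η f y‖ ≤ C := by
  have h := norm_integral_le_of_norm_le ((kernel_integrable hρ hη y).mul_const C)
    (f := fun x => ((η ^ 3)⁻¹ * ρ (η⁻¹ • (y - x))) • f x) (ae_of_all _ fun x => by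
      have h0 : 0 ≤ (η ^ 3)⁻¹ * ρ (η⁻¹ • (y - x)) := mul_nonneg (by positivity) (hρpos _)
      rw [norm_smul, Real.norm_of_nonneg h0]
      exact mul_le_mul_of_nonneg_left (hC x) h0)
  rwa [integral_mul_const, kernel_integral hρint hη, one_mul] at h

/-- Weak-* convergence, tested against the kernel in each coordinate, gives pointwise convergence
of the mollifications at a fixed scale. -/
lemma mollify_tendsto_of_weak {ρ : (Fin 3 → ℝ) → ℝ} (hρ : Integrable ρ) {η : ℝ} (hη : 0 < η)
    {d : ℕ} {zk : ℕ → (Fin 3 → ℝ) → Fin d → ℝ} {z : (Fin 3 → ℝ) → Fin d → ℝ}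
    (hzk : ∀ k, Measurable (zk k)) (hz : Measurable z) {C : ℝ}
    (hzkC : ∀ k y, ‖zk k y‖ ≤ C) (hzC : ∀ y, ‖z y‖ ≤ C)
    (hweak : ∀ g : (Fin 3 → ℝ) → Fin d → ℝ, Integrable g →
      Tendsto (fun k => ∫ y, ∑ i, zk k y i * g y i) atTop
        (𝓝 (∫ y, ∑ i, z y i * g y i))) (y : Fin 3 → ℝ) :
    Tendsto (fun k => mollify ρ η (zk k) y) atTop (𝓝 (mollify ρ η z y)) := by
  rw [tendsto_pi_nhds]
  intro i
  have key : ∀ f : (Fin 3 → ℝ) → Fin d → ℝ, Measurable f → (∀ y, ‖f y‖ ≤ C) →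
      mollify ρ η f y i =
        ∫ x, ∑ j, f x j * (Pi.single i ((η ^ 3)⁻¹ * ρ (η⁻¹ • (y - x))) : Fin d → ℝ) j := by
    intro f hf hfC
    unfold mollify
    rw [eval_integral fun j => (mollify_integrand_integrable hρ hη hf hfC y).eval j]
    congr 1
    funext x
    rw [Finset.sum_eq_single i (fun j _ hj => by simp [hj]) (by simp)]
    simp [mul_comm]
  rw [key z hz hzC]
  simp_rw [fun k => key (zk k) (hzk k) (hzkC k)]
  apply hweak
  refine Integrable.of_eval fun j => ?_
  by_cases hj : j = i
  · subst hj
    simpa using kernel_integrable hρ hη y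
  · simp [hj]

/-- The weak-* limit inherits the support condition, by testing with `z` itself restricted to
bounded pieces of `Ωᶜ`. -/
lemma weak_limit_support {d : ℕ} {Ω : Set (Fin 3 → ℝ)} (hΩ : MeasurableSet Ω)
    {zk : ℕ → (Fin 3 → ℝ) → Fin d → ℝ} {z : (Fin 3 → ℝ) → Fin d → ℝ}
    (hz : Measurable z) {C : ℝ} (hzC : ∀ y, ‖z y‖ ≤ C)
    (hsupp : ∀ k, ∀ᵐ y ∂volume, y ∉ Ω → zk k y = 0)
    (hweak : ∀ g : (Fin 3 → ℝ) → Fin d → ℝ, Integrable g →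
      Tendsto (fun k => ∫ y, ∑ i, zk k y i * g y i) atTop
        (𝓝 (∫ y, ∑ i, z y i * g y i))) :
    ∀ᵐ y ∂volume, y ∉ Ω → z y = 0 := by
  have step : ∀ n : ℕ, ∀ᵐ y ∂volume, y ∈ Ωᶜ ∩ Metric.closedBall 0 (n : ℝ) → z y = 0 := by
    intro n
    set A : Set (Fin 3 → ℝ) := Ωᶜ ∩ Metric.closedBall 0 (n : ℝ) with hA
    have hAm : MeasurableSet A := hΩ.compl.inter Metric.isClosed_closedBall.measurableSet
    have hAfin : volume A < ⊤ :=
      (measure_mono Set.inter_subset_right).trans_lt measure_closedBall_lt_top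
    have : IsFiniteMeasure (volume.restrict A) := ⟨by simpa using hAfin⟩
    have hgi : Integrable (A.indicator z) := by
      rw [integrable_indicator_iff hAm]
      exact Integrable.of_bound hz.aestronglyMeasurable C (ae_of_all _ hzC)
    have h0 : ∀ k, ∫ y, ∑ i, zk k y i * A.indicator z y i = 0 := by
      intro k
      apply integral_eq_zero_of_ae
      filter_upwards [hsupp k] with y hy
      apply Finset.sum_eq_zero
      intro i _
      by_cases hyA : y ∈ A
      · simp [hy hyA.1]
      · simp [hyA]
    have hlim := hweak _ hgi
    simp_rw [h0] at hlim
    have hzero := tendsto_nhds_unique hlim tendsto_const_nhds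
    have hsumint : Integrable fun y => ∑ i, z y i * A.indicator z y i := by
      refine integrable_finsetSum _ fun i _ => ?_
      exact (hgi.eval i).bdd_mul (c := C) (measurable_pi_iff.1 hz i).aestronglyMeasurable
        (ae_of_all _ fun y => (norm_le_pi_norm _ i).trans (hzC y))
    rw [integral_eq_zero_iff_of_nonneg _ hsumint] at hzero
    · filter_upwards [hzero] with y hy hyA
      simp only [Set.indicator_of_mem hyA, Pi.zero_apply] at hy
      rw [Finset.sum_eq_zero_iff_of_nonneg fun i _ => mul_self_nonneg _] at hy
      funext i
      exact mul_self_eq_zero.1 (hy i (Finset.mem_univ i))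
    · intro y
      apply Finset.sum_nonneg
      intro i _
      by_cases hyA : y ∈ A
      · simpa [hyA] using mul_self_nonneg (z y i)
      · simp [hyA]
  filter_upwards [ae_all_iff.2 step] with y hy hyΩ
  obtain ⟨n, hn⟩ := exists_nat_ge ‖y‖
  exact hy n ⟨hyΩ, by simpa using hn⟩

/-- Mollifications converge at every Lebesgue point: if `ρ ≤ M` is supported in the ball of
radius `R`, then `ρ_η` is bounded by a constant over the volume of its supporting ball of
radius `R η`. -/
lemma mollify_ae_tendsto {ρ : (Fin 3 → ℝ) → ℝ} (hρc : Continuous ρ) (hρsupp : HasCompactSupport ρ)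
    (hρint : ∫ x, ρ x = 1) {η : ℕ → ℝ} (hη : ∀ k, 0 < η k) (hη0 : Tendsto η atTop (𝓝 0))
    {d : ℕ} {z : (Fin 3 → ℝ) → Fin d → ℝ} (hz : LocallyIntegrable z) :
    ∀ᵐ y, Tendsto (fun k => mollify ρ (η k) z y) atTop (𝓝 (z y)) := by
  obtain ⟨R, hR, hRsupp⟩ := hρsupp.isBounded.exists_pos_norm_le
  obtain ⟨M, hM⟩ := hρsupp.exists_bound_of_continuous hρc
  filter_upwards [(Besicovitch.vitaliFamily volume).ae_tendsto_average_norm_sub hz] with y hy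
  have hrad : Tendsto (fun k => R * η k) atTop (𝓝[>] 0) :=
    tendsto_nhdsWithin_iff.2 ⟨by simpa using hη0.const_mul R,
      Eventually.of_forall fun k => mul_pos hR (hη k)⟩
  have havg := (hy.comp (Besicovitch.tendsto_filterAt volume y)).comp hrad
  apply tendsto_integral_smul_of_tendsto_average_norm_sub
    (M * R ^ 3 * volume.real (Metric.closedBall (0 : Fin 3 → ℝ) 1)) havg
  · exact Eventually.of_forall fun k => hz.integrableOn_isCompact (isCompact_closedBall _ _)
  · simp_rw [fun k => kernel_integral hρint (hη k) y]
    exact tendsto_const_nhds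
  · refine Eventually.of_forall fun k x hx => ?_
    have h1 := hRsupp _ (subset_tsupport _ (right_ne_zero_of_mul hx))
    rw [norm_smul, norm_inv, Real.norm_of_nonneg (hη k).le, inv_mul_le_iff₀ (hη k)] at h1
    simpa [dist_eq_norm_sub', mul_comm] using h1
  · refine Eventually.of_forall fun k x => ?_
    have hpos : 0 < volume.real (Metric.closedBall (0 : Fin 3 → ℝ) 1) :=
      ENNReal.toReal_pos (Metric.measure_closedBall_pos _ _ one_pos).ne'
        measure_closedBall_lt_top.ne
    have hηk := hη k
    have h1 := hM ((η k)⁻¹ • (y - x))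
    rw [Measure.addHaar_real_closedBall' _ y (r := R * η k) (by positivity), abs_mul,
      abs_of_pos (by positivity : 0 < ((η k) ^ 3)⁻¹), Module.finrank_fin_fun]
    calc ((η k) ^ 3)⁻¹ * |ρ ((η k)⁻¹ • (y - x))| ≤ ((η k) ^ 3)⁻¹ * M := by gcongr; exact h1
      _ = _ := by field_simp

/-- Mollifications of a bounded function supported in a bounded set converge in `L²`. -/
lemma mollify_tendsto_L2 {ρ : (Fin 3 → ℝ) → ℝ} (hρc : Continuous ρ) (hρsupp : HasCompactSupport ρ)
    (hρpos : ∀ x, 0 ≤ ρ x)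
    (hρint : ∫ x, ρ x = 1) {η : ℕ → ℝ} (hη : ∀ k, 0 < η k) (hη1 : ∀ k, η k ≤ 1)
    (hη0 : Tendsto η atTop (𝓝 0))
    {d : ℕ} {z : (Fin 3 → ℝ) → Fin d → ℝ} (hz : Measurable z) {C : ℝ} (hzC : ∀ y, ‖z y‖ ≤ C)
    {Ω : Set (Fin 3 → ℝ)} (hΩ : Bornology.IsBounded Ω) (hzΩ : ∀ᵐ y, y ∉ Ω → z y = 0) :
    Tendsto (fun k => eLpNorm (mollify ρ (η k) z - z) 2 volume) atTop (𝓝 0) := by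
  have hρ : Integrable ρ := hρc.integrable_of_hasCompactSupport hρsupp
  obtain ⟨R, hR, hRsupp⟩ := hρsupp.isBounded.exists_pos_norm_le
  obtain ⟨S, hS, hSΩ⟩ := hΩ.exists_pos_norm_le
  have hloc : LocallyIntegrable z := by
    have : MemLp z ⊤ := memLp_top_of_bound hz.aestronglyMeasurable C (ae_of_all _ hzC)
    exact this.locallyIntegrable le_top
  have hzero : ∀ k y, S + R < ‖y‖ → mollify ρ (η k) z y = 0 := by
    intro k y hy
    apply integral_eq_zero_of_ae
    filter_upwards [hzΩ] with x hx
    by_cases hxΩ : x ∈ Ω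
    · have : ρ ((η k)⁻¹ • (y - x)) = 0 := by
        by_contra hne
        have h1 := hRsupp _ (subset_tsupport _ hne)
        rw [norm_smul, norm_inv, Real.norm_of_nonneg (hη k).le, inv_mul_le_iff₀ (hη k)] at h1
        have h2 := hSΩ x hxΩ
        have h3 := norm_sub_norm_le y x
        have h4 : η k * R ≤ R := mul_le_of_le_one_left hR.le (hη1 k)
        linarith
      simp [this]
    · simp [hx hxΩ]
  have hdom : Tendsto (fun k => ∫⁻ y, ‖(mollify ρ (η k) z - z) y‖ₑ ^ (2 : ℝ)) atTop
      (𝓝 (∫⁻ _ : Fin 3 → ℝ, 0)) := by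
    refine tendsto_lintegral_of_dominated_convergence'
      ((Metric.closedBall (0 : Fin 3 → ℝ) (S + R)).indicator
        fun _ => ENNReal.ofReal (2 * C) ^ (2 : ℝ)) ?_ ?_ ?_ ?_
    · intro k
      exact (((mollify_measurable hρc _ hz).measurable.sub hz).enorm.pow_const _).aemeasurable
    · intro k
      filter_upwards [hzΩ] with y hy
      by_cases hyB : y ∈ Metric.closedBall (0 : Fin 3 → ℝ) (S + R)
      · rw [Set.indicator_of_mem hyB]
        gcongr
        rw [← ofReal_norm]
        apply ENNReal.ofReal_le_ofReal
        refine (norm_sub_le _ _).trans ?_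
        linarith [hzC y, norm_mollify_le hρ hρpos hρint (hη k) hzC y]
      · have hy' : S + R < ‖y‖ := by simpa using hyB
        have : y ∉ Ω := fun h => by linarith [hSΩ y h]
        simp [hzero k y hy', hy this]
    · rw [lintegral_indicator Metric.isClosed_closedBall.measurableSet, setLIntegral_const]
      exact ENNReal.mul_ne_top (ENNReal.rpow_ne_top_of_nonneg (by norm_num) ENNReal.ofReal_ne_top)
        measure_closedBall_lt_top.ne
    · filter_upwards [mollify_ae_tendsto hρc hρsupp hρint hη hη0 hloc] with y hy
      have h1 : Tendsto (fun k => ‖(mollify ρ (η k) z - z) y‖ₑ) atTop (𝓝 0) := by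
        have := (hy.sub_const (z y)).enorm
        simpa using this
      simpa using h1.ennrpow_const 2
  simp_rw [eLpNorm_eq_lintegral_rpow_enorm_toReal two_ne_zero ENNReal.ofNat_ne_top]
  have := hdom.ennrpow_const (1 / 2)
  simpa using this

/-- The telescoping mollification argument: if a uniformly bounded sequence
`z_k` in `L^∞`, supported a.e. in a bounded set `Ω`, converges weakly-* to `z`, and for some
`0 < η_k < 2^{−k}` one has `‖z_k − z_k ∗ ρ_{η_k}‖_{L²} < 2^{−k}` and
`‖(z_{k+1} − z_k) ∗ ρ_{η_j}‖_{L²} < 2^{−k}` for all `j ≤ k`, then `z_k → z` strongly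
in `L²`. -/
theorem stmt_18 (d : ℕ)
    (ρ : (Fin 3 → ℝ) → ℝ) (hρsmooth : ContDiff ℝ (⊤ : ℕ∞) ρ) (hρsupp : HasCompactSupport ρ)
    (hρpos : ∀ x, 0 ≤ ρ x) (hρint : ∫ x, ρ x = 1)
    (Ω : Set (Fin 3 → ℝ)) (hΩbdd : Bornology.IsBounded Ω) (hΩmeas : MeasurableSet Ω)
    (zk : ℕ → (Fin 3 → ℝ) → Fin d → ℝ) (z : (Fin 3 → ℝ) → Fin d → ℝ)
    (hzkmeas : ∀ k, Measurable (zk k)) (hzmeas : Measurable z)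
    (hbdd : ∃ C : ℝ, (∀ k y, ‖zk k y‖ ≤ C) ∧ ∀ y, ‖z y‖ ≤ C)
    (hsupp : ∀ k, ∀ᵐ y ∂volume, y ∉ Ω → zk k y = 0)
    (hweak : ∀ g : (Fin 3 → ℝ) → Fin d → ℝ, Integrable g →
      Tendsto (fun k => ∫ y, ∑ i, zk k y i * g y i) atTop
        (𝓝 (∫ y, ∑ i, z y i * g y i)))
    (η : ℕ → ℝ) (hη : ∀ k, 0 < η k ∧ η k < 2 ^ (-(k : ℤ)))
    (hmol : ∀ k, eLpNorm (zk k - mollify ρ (η k) (zk k)) 2 volume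
      < ENNReal.ofReal (2 ^ (-(k : ℤ))))
    (htel : ∀ k, ∀ j ≤ k, eLpNorm (mollify ρ (η j) (zk (k + 1) - zk k)) 2 volume
      < ENNReal.ofReal (2 ^ (-(k : ℤ)))) :
    Tendsto (fun k => eLpNorm (zk k - z) 2 volume) atTop (𝓝 0) := by
  have hρc : Continuous ρ := hρsmooth.continuous
  have hρ : Integrable ρ := hρc.integrable_of_hasCompactSupport hρsupp
  obtain ⟨C, hzkC, hzC⟩ := hbdd
  have hzΩ := weak_limit_support hΩmeas hzmeas hzC hsupp hweak
  have hpow : ∀ k : ℕ, (2 : ℝ) ^ (-(k : ℤ)) = (1 / 2) ^ k := fun k => by simp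
  simp_rw [hpow] at hη hmol htel
  have hη2 : ∀ k, η k < (1 / 2) ^ k := fun k => (hη k).2
  have hhalf : Tendsto (fun k : ℕ => (1 / 2 : ℝ) ^ k) atTop (𝓝 0) :=
    tendsto_pow_atTop_nhds_zero_of_lt_one (by norm_num) (by norm_num)
  have hη0 : Tendsto η atTop (𝓝 0) :=
    squeeze_zero (fun k => (hη k).1.le) (fun k => (hη2 k).le) hhalf
  have hη1 : ∀ k, η k ≤ 1 := fun k =>
    (hη2 k).le.trans (pow_le_one₀ (by norm_num) (by norm_num))
  have hmeas : ∀ j k, AEStronglyMeasurable (mollify ρ (η j) (zk k)) volume := fun j k =>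
    (mollify_measurable hρc _ (hzkmeas k)).aestronglyMeasurable
  have hmeasz : ∀ j, AEStronglyMeasurable (mollify ρ (η j) z) volume := fun j =>
    (mollify_measurable hρc _ hzmeas).aestronglyMeasurable
  -- Telescoping: the partial geometric sums `∑_{k ≤ i < k+n} 2⁻ⁱ` in closed form.
  have htele : ∀ k n, eLpNorm (mollify ρ (η k) (zk k) - mollify ρ (η k) (zk (k + n))) 2 volume
      ≤ ENNReal.ofReal (2 * (1 / 2) ^ k - 2 * (1 / 2) ^ (k + n)) := by
    intro k n
    induction n with
    | zero => simp
    | succ n ih =>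
      have hstep : eLpNorm (mollify ρ (η k) (zk (k + n)) - mollify ρ (η k) (zk (k + n + 1))) 2
          volume ≤ ENNReal.ofReal ((1 / 2) ^ (k + n)) := by
        rw [eLpNorm_sub_comm, ← mollify_sub hρ (hη k).1 (hzkmeas _) (hzkmeas _) (hzkC _) (hzkC _)]
        exact (htel (k + n) k (Nat.le_add_right k n)).le
      calc eLpNorm (mollify ρ (η k) (zk k) - mollify ρ (η k) (zk (k + (n + 1)))) 2 volume
          = eLpNorm ((mollify ρ (η k) (zk k) - mollify ρ (η k) (zk (k + n))) +
              (mollify ρ (η k) (zk (k + n)) - mollify ρ (η k) (zk (k + n + 1)))) 2 volume := by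
            rw [sub_add_sub_cancel, add_assoc]
        _ ≤ _ := eLpNorm_add_le ((hmeas _ _).sub (hmeas _ _)) ((hmeas _ _).sub (hmeas _ _))
            (by norm_num)
        _ ≤ _ := add_le_add ih hstep
        _ = _ := by
            rw [← ENNReal.ofReal_add _ (by positivity)]
            · congr 1
              ring
            · have : (1 / 2 : ℝ) ^ (k + n) ≤ (1 / 2) ^ k :=
                pow_le_pow_of_le_one (by norm_num) (by norm_num) (Nat.le_add_right k n)
              linarith
  -- Fatou's lemma passes the telescoping bound to the weak-* limit at the fixed scale `η k`.
  have hmid : ∀ k, eLpNorm (mollify ρ (η k) (zk k) - mollify ρ (η k) z) 2 volume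
      ≤ ENNReal.ofReal (2 * (1 / 2) ^ k) := by
    intro k
    refine (Lp.eLpNorm_lim_le_liminf_eLpNorm
      (f := fun n => mollify ρ (η k) (zk k) - mollify ρ (η k) (zk (k + n)))
      (fun n => (hmeas _ _).sub (hmeas _ _)) _ (ae_of_all _ fun y => ?_)).trans ?_
    · have h := mollify_tendsto_of_weak hρ (hη k).1 hzkmeas hzmeas hzkC hzC hweak y
      have h' := (tendsto_add_atTop_iff_nat k).2 h
      simp_rw [add_comm _ k] at h'
      exact h'.const_sub _
    · refine liminf_le_of_frequently_le' (Frequently.of_forall fun n => (htele k n).trans ?_)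
      apply ENNReal.ofReal_le_ofReal
      have : (0 : ℝ) ≤ 2 * (1 / 2) ^ (k + n) := by positivity
      linarith
  have hbound : ∀ k, eLpNorm (zk k - z) 2 volume ≤ ENNReal.ofReal ((1 / 2) ^ k) +
      ENNReal.ofReal (2 * (1 / 2) ^ k) + eLpNorm (mollify ρ (η k) z - z) 2 volume := by
    intro k
    have hdecomp : zk k - z = ((zk k - mollify ρ (η k) (zk k)) +
        (mollify ρ (η k) (zk k) - mollify ρ (η k) z)) + (mollify ρ (η k) z - z) := by
      abel
    have hzkm := (hzkmeas k).aestronglyMeasurable (μ := volume)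
    have hzm := hzmeas.aestronglyMeasurable (μ := volume)
    rw [hdecomp]
    refine (eLpNorm_add_le ((hzkm.sub (hmeas _ _)).add ((hmeas _ _).sub (hmeasz _)))
      ((hmeasz _).sub hzm) (by norm_num)).trans ?_
    gcongr
    refine (eLpNorm_add_le (hzkm.sub (hmeas _ _)) ((hmeas _ _).sub (hmeasz _))
      (by norm_num)).trans ?_
    exact add_le_add (hmol k).le (hmid k)
  have hL2 := mollify_tendsto_L2 hρc hρsupp hρpos hρint (fun k => (hη k).1) hη1 hη0 hzmeas hzC
    hΩbdd hzΩ
  refine tendsto_of_tendsto_of_tendsto_of_le_of_le tendsto_const_nhds ?_ (fun _ => zero_le) hbound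
  simpa using ((ENNReal.tendsto_ofReal hhalf).add
    (ENNReal.tendsto_ofReal (hhalf.const_mul 2))).add hL2
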